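/- (Symmetry of the Ricci field, Eq. LGS.3.) Suppose the connection D on U is g-compatible and symmetric (Γ x u v = Γ x v u for all x, u, v). For u, v ∈ V and x ∈ U define Ric_x(u,v) := tr (w ↦ ρ(ŵ, û, v̂) x), where ŵ, û, v̂ denote the constant vector fields with values w, u, v. Then Ric_x is symmetric: Ric_x(u,v) = Ric_x(v,u) for all u, v ∈ V and x ∈ U. -/

import Mathlib

open scoped RealInnerProductSpace

variable {V : Type*} [NormedAddCommGroup V] [InnerProductSpace ℝ V] [FiniteDimensional ℝ V]

/-- A vector field on `U` is a smooth map `U → V`. -/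
def IsVectorField (U : Set V) (X : V → V) : Prop := ContDiffOn ℝ (⊤ : ℕ∞) X U

/-- Directional derivative `(a·∂X)(x) = fderiv ℝ X x (a x)`. -/
noncomputable def dirD (a X : V → V) : V → V := fun x => fderiv ℝ X x (a x)

/-- Lie bracket `[a,b] = a·∂b − b·∂a`. -/
noncomputable def bracket (a b : V → V) : V → V := fun x => dirD a b x - dirD b a x

/-- Smoothness of a connection field `Γ`. -/
def IsConnection (U : Set V) (Γ : V → V →ₗ[ℝ] V →ₗ[ℝ] V) : Prop :=
  ∀ u v : V, ContDiffOn ℝ (⊤ : ℕ∞) (fun x => Γ x u v) U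

/-- Covariant derivative associated to the connection field `Γ`. -/
noncomputable def covD (Γ : V → V →ₗ[ℝ] V →ₗ[ℝ] V) (a X : V → V) : V → V :=
  fun x => fderiv ℝ X x (a x) + Γ x (a x) (X x)

/-- Curvature of an abstract covariant-derivative operator. -/
noncomputable def curvOf (Dop : (V → V) → (V → V) → (V → V)) (a b c : V → V) : V → V :=
  fun x => Dop a (Dop b c) x - Dop b (Dop a c) x - Dop (bracket a b) c x

/-- Curvature field `ρ(a,b,c) = D_a (D_b c) − D_b (D_a c) − D_{[a,b]} c`. -/
noncomputable def curv (Γ : V → V →ₗ[ℝ] V →ₗ[ℝ] V) : (V → V) → (V → V) → (V → V) → V → V :=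
  curvOf (covD Γ)

/-- A metric on `U`: smooth, pointwise self-adjoint and invertible. -/
def IsMetric (U : Set V) (g : V → V →ₗ[ℝ] V) : Prop :=
  (∀ u : V, ContDiffOn ℝ (⊤ : ℕ∞) (fun x => g x u) U) ∧
  ∀ x ∈ U, (∀ u v : V, ⟪g x u, v⟫ = ⟪u, g x v⟫) ∧ Function.Bijective (g x)

/-- Compatibility of an abstract covariant-derivative operator with the metric `g`:
`a·∂(X ·_g Y) = (D_a X) ·_g Y + X ·_g (D_a Y)` on `U`. -/
def CompatibleD (U : Set V) (Dop : (V → V) → (V → V) → (V → V)) (g : V → V →ₗ[ℝ] V) : Prop :=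
  ∀ a X Y : V → V, IsVectorField U a → IsVectorField U X → IsVectorField U Y →
    ∀ x ∈ U, fderiv ℝ (fun y => ⟪g y (X y), Y y⟫) x (a x) =
      ⟪g x (Dop a X x), Y x⟫ + ⟪g x (X x), Dop a Y x⟫

/-- Compatibility of the connection `Γ` with the metric `g`. -/
def Compatible (U : Set V) (Γ : V → V →ₗ[ℝ] V →ₗ[ℝ] V) (g : V → V →ₗ[ℝ] V) : Prop :=
  CompatibleD U (covD Γ) g

/-! If `D` is compatible with `g`, the scalar fields `X ·_g Y` obey a Leibniz rule; applying it to
`a·∂(b·∂f) − b·∂(a·∂f) = [a,b]·∂f` with `f = X ·_g Y` shows that the curvature endomorphism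
`ρ(a,b,·)` is skew-adjoint for the bilinear form `⟪g x ·, ·⟫`, so its trace vanishes as soon as that
form is nondegenerate. By the first Bianchi identity, `Ric(v,u) − Ric(u,v)` is the trace of
`ρ(û,v̂,·)`. -/

section LinearAlgebra

variable {K W : Type*} [Field K] [NeZero (2 : K)] [AddCommGroup W] [Module K W]
  [FiniteDimensional K W]

lemma trace_eq_zero_of_isSkewAdjoint {B : LinearMap.BilinForm K W} (hB : B.SeparatingLeft)
    {f : W →ₗ[K] W} (hf : B.IsSkewAdjoint f) : LinearMap.trace K W f = 0 := by
  let e : W ≃ₗ[K] Module.Dual K W := LinearMap.linearEquivOfInjective B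
    (LinearMap.ker_eq_bot.mp (LinearMap.separatingLeft_iff_ker_eq_bot.mp hB))
    Subspace.dual_finrank_eq.symm
  have conj_eq : e.conj f = Module.Dual.transpose (R := K) (-f) := by
    ext φ w
    obtain ⟨z, rfl⟩ := e.surjective φ
    rw [LinearEquiv.conj_apply_apply, e.symm_apply_apply]
    exact hf z w
  have trace_eq_neg : LinearMap.trace K W f = -LinearMap.trace K W f :=
    calc LinearMap.trace K W f = LinearMap.trace K _ (e.conj f) := (LinearMap.trace_conj' f e).symm
      _ = -LinearMap.trace K W f := by rw [conj_eq, LinearMap.trace_transpose', map_neg]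
  have two_mul_trace : (2 : K) * LinearMap.trace K W f = 0 := by linear_combination trace_eq_neg
  exact (mul_eq_zero.mp two_mul_trace).resolve_left two_ne_zero

end LinearAlgebra

lemma minSmoothness_two_le_infty : minSmoothness ℝ 2 ≤ ((⊤ : ℕ∞) : WithTop ℕ∞) := by
  rw [minSmoothness_of_isRCLikeNormedField]
  exact WithTop.coe_le_coe.mpr le_top

lemma contDiffOn_linearMap_apply {𝕜 E F G : Type*} [NontriviallyNormedField 𝕜] [CompleteSpace 𝕜]
    [NormedAddCommGroup E] [NormedSpace 𝕜 E] [NormedAddCommGroup F] [NormedSpace 𝕜 F]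
    [FiniteDimensional 𝕜 F] [NormedAddCommGroup G] [NormedSpace 𝕜 G] {n : WithTop ℕ∞} {s : Set E}
    {A : E → F →ₗ[𝕜] G} {X : E → F} (hA : ∀ v, ContDiffOn 𝕜 n (fun x => A x v) s)
    (hX : ContDiffOn 𝕜 n X s) : ContDiffOn 𝕜 n (fun x => A x (X x)) s :=
  (contDiffOn_clm_apply (f := fun x => (A x).toContinuousLinearMap).mpr hA).clm_apply hX

section Curvature

variable {U : Set V} {Γ : V → V →ₗ[ℝ] V →ₗ[ℝ] V} {g : V → V →ₗ[ℝ] V} {a b c X Y : V → V} {x : V}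

section VectorFields

omit [FiniteDimensional ℝ V]

lemma isVectorField_const (w : V) : IsVectorField U (fun _ => w) := contDiffOn_const

namespace IsVectorField

lemma contDiffAt (hX : IsVectorField U X) (hU : IsOpen U) (hx : x ∈ U) :
    ContDiffAt ℝ (⊤ : ℕ∞) X x :=
  ContDiffOn.contDiffAt hX (hU.mem_nhds hx)

lemma differentiableAt (hX : IsVectorField U X) (hU : IsOpen U) (hx : x ∈ U) :
    DifferentiableAt ℝ X x :=
  (hX.contDiffAt hU hx).differentiableAt (by simp)

lemma dirD (ha : IsVectorField U a) (hX : IsVectorField U X) (hU : IsOpen U) :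
    IsVectorField U (dirD a X) :=
  (ContDiffOn.fderiv_of_isOpen hX hU (by simp)).clm_apply ha

lemma bracket (ha : IsVectorField U a) (hb : IsVectorField U b) (hU : IsOpen U) :
    IsVectorField U (bracket a b) :=
  ContDiffOn.sub (ha.dirD hb hU) (hb.dirD ha hU)

end IsVectorField

lemma bracket_swap (a b : V → V) : bracket b a = -bracket a b :=
  funext fun _ => VectorField.lieBracket_swap

lemma bracket_neg_right (a b : V → V) : bracket a (-b) = -bracket a b := by
  funext x
  simp only [bracket, dirD, fderiv_neg, Pi.neg_apply, neg_apply, map_neg]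
  abel

lemma bracket_jacobi (hU : IsOpen U) (ha : IsVectorField U a) (hb : IsVectorField U b)
    (hc : IsVectorField U c) (hx : x ∈ U) :
    bracket a (bracket b c) x + bracket b (bracket c a) x + bracket c (bracket a b) x = 0 := by
  have leibniz :
      bracket a (bracket b c) x = bracket (bracket a b) c x + bracket b (bracket a c) x :=
    VectorField.leibniz_identity_lieBracket minSmoothness_two_le_infty (ha.contDiffAt hU hx)
      (hb.contDiffAt hU hx) (hc.contDiffAt hU hx)
  rw [leibniz, bracket_swap a c, bracket_neg_right, bracket_swap (bracket a b) c]
  simp only [Pi.neg_apply]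
  abel

end VectorFields

section CovariantDerivative

omit [FiniteDimensional ℝ V]

lemma covD_congr (h : X =ᶠ[nhds x] Y) : covD Γ a X x = covD Γ a Y x := by
  simp only [covD, h.fderiv_eq, h.eq_of_nhds]

lemma covD_neg_left (Γ : V → V →ₗ[ℝ] V →ₗ[ℝ] V) (a X : V → V) : covD Γ (-a) X = -covD Γ a X := by
  funext x
  simp only [covD, Pi.neg_apply, map_neg, LinearMap.neg_apply, neg_add]

lemma covD_add_right (hX : DifferentiableAt ℝ X x) (hY : DifferentiableAt ℝ Y x) :
    covD Γ a (X + Y) x = covD Γ a X x + covD Γ a Y x := by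
  simp only [covD, fderiv_add hX hY, Pi.add_apply, map_add, add_apply]
  abel

lemma covD_sub_covD_swap (hsymm : ∀ u v : V, Γ x u v = Γ x v u) (a b : V → V) :
    covD Γ a b x - covD Γ b a x = bracket a b x := by
  simp only [covD, bracket, dirD, hsymm (a x)]
  abel

lemma curv_swap (Γ : V → V →ₗ[ℝ] V →ₗ[ℝ] V) (a b c : V → V) (x : V) :
    curv Γ b a c x = -curv Γ a b c x := by
  simp only [curv, curvOf, bracket_swap a b, covD_neg_left, Pi.neg_apply]
  abel

end CovariantDerivative

lemma IsVectorField.covD (hΓ : IsConnection U Γ) (hU : IsOpen U) (ha : IsVectorField U a)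
    (hX : IsVectorField U X) : IsVectorField U (covD Γ a X) := by
  have hΓa (w : V) : ContDiffOn ℝ (⊤ : ℕ∞) (fun y => Γ y (a y) w) U :=
    contDiffOn_linearMap_apply (A := fun y => (Γ y).flip w) (fun v => hΓ v w) ha
  exact ContDiffOn.add (ha.dirD hX hU) (contDiffOn_linearMap_apply hΓa hX)

section Bianchi

lemma covD_covD_swap (hU : IsOpen U) (hΓ : IsConnection U Γ)
    (hsymm : ∀ x ∈ U, ∀ u v : V, Γ x u v = Γ x v u) (a : V → V) (hb : IsVectorField U b)
    (hc : IsVectorField U c) (hx : x ∈ U) :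
    covD Γ a (covD Γ b c) x = covD Γ a (covD Γ c b) x + covD Γ a (bracket b c) x := by
  have torsion_free : covD Γ b c =ᶠ[nhds x] covD Γ c b + bracket b c := by
    filter_upwards [hU.mem_nhds hx] with y hy
    exact sub_eq_iff_eq_add'.mp (covD_sub_covD_swap (hsymm y hy) b c)
  rw [covD_congr torsion_free, covD_add_right ((hc.covD hΓ hU hb).differentiableAt hU hx)
    ((hb.bracket hc hU).differentiableAt hU hx)]

theorem curv_first_bianchi (hU : IsOpen U) (hΓ : IsConnection U Γ)
    (hsymm : ∀ x ∈ U, ∀ u v : V, Γ x u v = Γ x v u) (ha : IsVectorField U a)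
    (hb : IsVectorField U b) (hc : IsVectorField U c) (hx : x ∈ U) :
    curv Γ a b c x + curv Γ b c a x + curv Γ c a b x = 0 := by
  have swap_bc := covD_covD_swap hU hΓ hsymm a hb hc hx
  have swap_ca := covD_covD_swap hU hΓ hsymm b hc ha hx
  have swap_ab := covD_covD_swap hU hΓ hsymm c ha hb hx
  calc curv Γ a b c x + curv Γ b c a x + curv Γ c a b x
      = (covD Γ a (bracket b c) x - covD Γ (bracket b c) a x)
        + (covD Γ b (bracket c a) x - covD Γ (bracket c a) b x)
        + (covD Γ c (bracket a b) x - covD Γ (bracket a b) c x) := by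
        simp only [curv, curvOf, swap_bc, swap_ca, swap_ab]
        abel
    _ = bracket a (bracket b c) x + bracket b (bracket c a) x + bracket c (bracket a b) x := by
        simp only [covD_sub_covD_swap (hsymm x hx)]
    _ = 0 := bracket_jacobi hU ha hb hc hx

end Bianchi

section Metric

/-- The `g`-scalar product `X ·_g Y` of two vector fields, as a scalar field. -/
noncomputable def metricProd (g : V → V →ₗ[ℝ] V) (X Y : V → V) : V → ℝ :=
  fun x => ⟪g x (X x), Y x⟫

lemma contDiffOn_metricProd (hg : ∀ u, IsVectorField U (fun x => g x u))
    (hX : IsVectorField U X) (hY : IsVectorField U Y) :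
    ContDiffOn ℝ (⊤ : ℕ∞) (metricProd g X Y) U :=
  (contDiffOn_linearMap_apply hg hX).inner ℝ hY

variable {Dop : (V → V) → (V → V) → (V → V)}

lemma CompatibleD.fderiv_fderiv_metricProd (hcomp : CompatibleD U Dop g) (hU : IsOpen U)
    (hg : ∀ u, IsVectorField U (fun x => g x u))
    (hD : ∀ {a X}, IsVectorField U a → IsVectorField U X → IsVectorField U (Dop a X))
    (ha : IsVectorField U a) (hb : IsVectorField U b) (hX : IsVectorField U X)
    (hY : IsVectorField U Y) (hx : x ∈ U) :
    fderiv ℝ (fun y => fderiv ℝ (metricProd g X Y) y (b y)) x (a x) =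
      metricProd g (Dop a (Dop b X)) Y x + metricProd g (Dop b X) (Dop a Y) x +
        (metricProd g (Dop a X) (Dop b Y) x + metricProd g X (Dop a (Dop b Y)) x) := by
  have leibniz : (fun y => fderiv ℝ (metricProd g X Y) y (b y)) =ᶠ[nhds x]
      fun y => metricProd g (Dop b X) Y y + metricProd g X (Dop b Y) y := by
    filter_upwards [hU.mem_nhds hx] with y hy using hcomp b X Y hb hX hY y hy
  have differentiableAt_metricProd {X Y : V → V} (hX : IsVectorField U X)
      (hY : IsVectorField U Y) : DifferentiableAt ℝ (metricProd g X Y) x :=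
    ((contDiffOn_metricProd hg hX hY).contDiffAt (hU.mem_nhds hx)).differentiableAt (by simp)
  rw [leibniz.fderiv_eq, fderiv_fun_add (differentiableAt_metricProd (hD hb hX) hY)
    (differentiableAt_metricProd hX (hD hb hY)), add_apply]
  exact congrArg₂ (· + ·) (hcomp a _ Y ha (hD hb hX) hY x hx) (hcomp a X _ ha hX (hD hb hY) x hx)

theorem CompatibleD.inner_curvOf_skew (hcomp : CompatibleD U Dop g) (hU : IsOpen U)
    (hg : ∀ u, IsVectorField U (fun x => g x u))
    (hD : ∀ {a X}, IsVectorField U a → IsVectorField U X → IsVectorField U (Dop a X))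
    (ha : IsVectorField U a) (hb : IsVectorField U b) (hX : IsVectorField U X)
    (hY : IsVectorField U Y) (hx : x ∈ U) :
    ⟪g x (curvOf Dop a b X x), Y x⟫ = -⟪g x (X x), curvOf Dop a b Y x⟫ := by
  have bracket_eq_commutator : fderiv ℝ (metricProd g X Y) x (bracket a b x) =
      fderiv ℝ (fun y => fderiv ℝ (metricProd g X Y) y (b y)) x (a x) -
        fderiv ℝ (fun y => fderiv ℝ (metricProd g X Y) y (a y)) x (b x) :=
    VectorField.fderiv_apply_lieBracket
      ((contDiffOn_metricProd hg hX hY).contDiffAt (hU.mem_nhds hx)) minSmoothness_two_le_infty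
      (hb.differentiableAt hU hx) (ha.differentiableAt hU hx)
  have leibniz_bracket : fderiv ℝ (metricProd g X Y) x (bracket a b x) =
      metricProd g (Dop (bracket a b) X) Y x + metricProd g X (Dop (bracket a b) Y) x :=
    hcomp _ X Y (ha.bracket hb hU) hX hY x hx
  rw [leibniz_bracket, hcomp.fderiv_fderiv_metricProd hU hg hD ha hb hX hY hx,
    hcomp.fderiv_fderiv_metricProd hU hg hD hb ha hX hY hx] at bracket_eq_commutator
  simp only [metricProd] at bracket_eq_commutator
  simp only [curvOf, map_sub, inner_sub_left, inner_sub_right]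
  linarith

end Metric

end Curvature

theorem ricci_field_symmetric_general
    (U : Set V) (hU : IsOpen U)
    (Γ : V → V →ₗ[ℝ] V →ₗ[ℝ] V) (hΓ : IsConnection U Γ)
    (g : V → V →ₗ[ℝ] V) (hg : ∀ u, IsVectorField U (fun x => g x u))
    (hcomp : Compatible U Γ g)
    (hsymm : ∀ x ∈ U, ∀ u v : V, Γ x u v = Γ x v u)
    (x : V) (hx : x ∈ U) (hgx : Function.Injective (g x)) (u v : V)
    (L M : V →ₗ[ℝ] V)
    (hL : ∀ w : V, L w = curv Γ (fun _ => w) (fun _ => u) (fun _ => v) x)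
    (hM : ∀ w : V, M w = curv Γ (fun _ => w) (fun _ => v) (fun _ => u) x) :
    LinearMap.trace ℝ V L = LinearMap.trace ℝ V M := by
  have sub_eq_curv (w : V) : (M - L) w = curv Γ (fun _ => u) (fun _ => v) (fun _ => w) x := by
    have bianchi := curv_first_bianchi hU hΓ hsymm (isVectorField_const u)
      (isVectorField_const v) (isVectorField_const w) hx
    rw [LinearMap.sub_apply, hL, hM, curv_swap Γ (fun _ => v) (fun _ => w),
      ← sub_eq_zero, ← neg_eq_zero, ← bianchi]
    abel
  have separating : (innerₗ V ∘ₗ g x).SeparatingLeft := fun w hw =>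
    (map_eq_zero_iff (g x) hgx).mp (inner_self_eq_zero.mp (hw (g x w)))
  have skew : (innerₗ V ∘ₗ g x).IsSkewAdjoint ⇑(M - L) := fun w z => by
    simp only [LinearMap.comp_apply, innerₗ_apply_apply, Pi.neg_apply, sub_eq_curv,
      inner_neg_right]
    exact hcomp.inner_curvOf_skew hU hg (IsVectorField.covD hΓ hU) (isVectorField_const u)
      (isVectorField_const v) (isVectorField_const w) (isVectorField_const z) hx
  have trace_sub := trace_eq_zero_of_isSkewAdjoint separating skew
  rw [map_sub] at trace_sub
  exact (sub_eq_zero.mp trace_sub).symm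

/-- Eq. (LGS.3): for a Levi-Civita structure the Ricci field
`Ric_x(u,v) = tr (w ↦ ρ(ŵ,û,v̂) x)` (with `ŵ,û,v̂` constant fields) is symmetric:
`Ric_x(u,v) = Ric_x(v,u)`. The traces are taken of the linear maps `L`, `M` realizing
`w ↦ ρ(ŵ,û,v̂) x` and `w ↦ ρ(ŵ,v̂,û) x`. -/
theorem ricci_field_symmetric
    (U : Set V) (hU : IsOpen U)
    (Γ : V → V →ₗ[ℝ] V →ₗ[ℝ] V) (hΓ : IsConnection U Γ)
    (g : V → V →ₗ[ℝ] V) (hg : IsMetric U g)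
    (hcomp : Compatible U Γ g)
    (hsymm : ∀ x ∈ U, ∀ u v : V, Γ x u v = Γ x v u)
    (x : V) (hx : x ∈ U) (u v : V)
    (L M : V →ₗ[ℝ] V)
    (hL : ∀ w : V, L w = curv Γ (fun _ => w) (fun _ => u) (fun _ => v) x)
    (hM : ∀ w : V, M w = curv Γ (fun _ => w) (fun _ => v) (fun _ => u) x) :
    LinearMap.trace ℝ V L = LinearMap.trace ℝ V M :=
  ricci_field_symmetric_general U hU Γ hΓ g hg.1 hcomp hsymm x hx (hg.2 x hx).2.1 u v L M
    hL hM
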